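/- Let n > c₁ ≥ c₂ and n·c₁ ≥ Σ ≥ n·c₂ be natural numbers with Σ even, c₂ ≥ 2, c₁ ≥ 3, and 9·c₁² ≤ Σ. Then every sequence in 𝒟(n,Σ,c₁,c₂) has the Erdős–Gallai property. -/

import Mathlib

/-!
Write `c = c₁`, let `A` be the sum of the first `k` entries and `R = S - A` the sum of the others.
There are at most `k` leading entries, each at most `c`, so `A ≤ k c`. If `k > c`, this is already
at most `k (k - 1)`. If `k ≤ c`, every entry `d ≤ c` satisfies `k d ≤ c min(d, k)`, so the
truncated tail `T` satisfies `k R ≤ c T`. Hence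
`c (k (k - 1) + T) ≥ c k (k - 1) + k (S - k c) = k (S - c) ≥ k c² ≥ c A`,
where `S ≥ c² + c` is all that is needed of the lower bound on `S`.
-/

/-- Sum of the first `k` entries of a sequence `d` of length `n`. -/
def psum {n : ℕ} (d : Fin n → ℕ) (k : ℕ) : ℕ :=
  ∑ i : Fin n, if (i : ℕ) < k then d i else 0

/-- The Erdős–Gallai inequality `EG_k`:
`∑_{i=1}^k dᵢ ≤ k(k−1) + ∑_{i=k+1}^n min(dᵢ,k)`. -/
def EGineq {n : ℕ} (d : Fin n → ℕ) (k : ℕ) : Prop :=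
  psum d k ≤ k * (k - 1) + ∑ i : Fin n, if k ≤ (i : ℕ) then min (d i) k else 0

/-- The Erdős–Gallai property: `EG_k` holds for all `1 ≤ k ≤ n`. -/
def EGprop {n : ℕ} (d : Fin n → ℕ) : Prop :=
  ∀ k, 1 ≤ k → k ≤ n → EGineq d k

/-- Membership in the region `𝒟(n,S,c₁,c₂)`: non-increasing, entries between
`c₂` and `c₁`, total sum `S`. -/
def memD {n : ℕ} (S c₁ c₂ : ℕ) (d : Fin n → ℕ) : Prop :=
  Antitone d ∧ (∀ i, c₂ ≤ d i ∧ d i ≤ c₁) ∧ ∑ i, d i = S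

theorem psum_le {n c : ℕ} (d : Fin n → ℕ) (hd : ∀ i, d i ≤ c) (k : ℕ) : psum d k ≤ k * c := by
  unfold psum
  rw [← Finset.sum_filter]
  refine (Finset.sum_le_card_nsmul _ _ c fun i _ => hd i).trans ?_
  rw [smul_eq_mul, Fin.card_filter_val_lt]
  exact Nat.mul_le_mul_right _ (min_le_right _ _)

theorem psum_add_tail {n : ℕ} (d : Fin n → ℕ) (k : ℕ) :
    psum d k + (∑ i : Fin n, if k ≤ (i : ℕ) then d i else 0) = ∑ i, d i := by
  unfold psum
  rw [← Finset.sum_add_distrib]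
  refine Finset.sum_congr rfl fun i _ => ?_
  split_ifs <;> omega

/-- Truncating the entries at `k ≤ c` shrinks the tail by a factor of at most `c / k`. -/
theorem mul_tail_le {n c : ℕ} (d : Fin n → ℕ) (hd : ∀ i, d i ≤ c) {k : ℕ} (hk : k ≤ c) :
    k * (∑ i : Fin n, if k ≤ (i : ℕ) then d i else 0) ≤
      c * ∑ i : Fin n, if k ≤ (i : ℕ) then min (d i) k else 0 := by
  rw [Finset.mul_sum, Finset.mul_sum]
  refine Finset.sum_le_sum fun i _ => ?_
  split_ifs
  · rcases le_total (d i) k with h | h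
    · rw [min_eq_left h]
      exact Nat.mul_le_mul_right _ hk
    · rw [min_eq_right h, mul_comm]
      exact Nat.mul_le_mul_right _ (hd i)
  · simp

/-- if `c₂ ≥ 2`, `c₁ ≥ 3` and `9·c₁² ≤ S`, then every sequence in
`𝒟(n,S,c₁,c₂)` has the Erdős–Gallai property. -/
theorem stmt7 (n S c₁ c₂ : ℕ) (h1 : c₁ < n) (h2 : c₂ ≤ c₁)
    (h3 : S ≤ n * c₁) (h4 : n * c₂ ≤ S) (hS : Even S)
    (hc₂ : 2 ≤ c₂) (hc₁ : 3 ≤ c₁) (hSig : 9 * c₁ ^ 2 ≤ S)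
    (d : Fin n → ℕ) (hd : memD S c₁ c₂ d) :
    EGprop d := by
  intro k hk1 _
  obtain ⟨_, hb, hsum⟩ := hd
  have hd' : ∀ i, d i ≤ c₁ := fun i => (hb i).2
  have hA := psum_le d hd' k
  unfold EGineq
  rcases Nat.lt_or_ge c₁ k with hk | hk
  · exact (hA.trans (Nat.mul_le_mul_left k (by omega))).trans (Nat.le_add_right _ _)
  · have hT := mul_tail_le d hd' hk
    have hR := psum_add_tail d k
    rw [hsum] at hR
    generalize (∑ i : Fin n, if k ≤ (i : ℕ) then d i else 0) = R at hT hR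
    generalize (∑ i : Fin n, if k ≤ (i : ℕ) then min (d i) k else 0) = T at hT ⊢
    generalize psum d k = A at hA hR ⊢
    -- Writing `k = m + 1` removes the truncated subtraction.
    obtain ⟨m, rfl⟩ : ∃ m, k = m + 1 := ⟨k - 1, by omega⟩
    rw [Nat.add_sub_cancel]
    have hS' : c₁ ^ 2 + c₁ ≤ S := by nlinarith
    have h5 : (m + 1) * (c₁ ^ 2 + c₁) ≤ (m + 1) * (A + R) :=
      Nat.mul_le_mul_left _ (hS'.trans hR.ge)
    have h6 : (m + 1) * A ≤ (m + 1) * ((m + 1) * c₁) := Nat.mul_le_mul_left _ hA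
    have h7 : c₁ * A ≤ c₁ * ((m + 1) * c₁) := Nat.mul_le_mul_left _ hA
    refine Nat.le_of_mul_le_mul_left (c := c₁) ?_ (by omega)
    nlinarith
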